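/- Under Assumption (A), exactly one of the following two statements holds: (1) for every i ∈ {1,…,n}, the ray {t·eᵢ : t ≥ 0} (where eᵢ is the i-th standard basis vector) is contained in the topological boundary ∂Γ_∞; (2) Γ_∞ = ℝⁿ. -/

import Mathlib

open Filter

/-- Assumption (A) from the paper: `Γ ⊆ ℝⁿ` is an open convex symmetric cone with
`Γₙ ⊆ Γ ⊆ Γ₁`, and `f : Γ → (0,∞)` is smooth, symmetric, concave, with positive partial
derivatives, vanishing at the boundary of `Γ`, and `f(Rλ) → +∞` as `R → +∞`. -/
structure AssumptionA (n : ℕ) (Γ : Set (Fin n → ℝ)) (f : (Fin n → ℝ) → ℝ) : Prop where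
  isOpen : IsOpen Γ
  convex : Convex ℝ Γ
  cone : ∀ x ∈ Γ, ∀ t : ℝ, 0 < t → t • x ∈ Γ
  perm_invariant : ∀ x ∈ Γ, ∀ σ : Equiv.Perm (Fin n), (fun i => x (σ i)) ∈ Γ
  orthant_subset : {x : Fin n → ℝ | ∀ i, 0 < x i} ⊆ Γ
  subset_halfspace : Γ ⊆ {x : Fin n → ℝ | 0 < ∑ i, x i}
  f_pos : ∀ x ∈ Γ, 0 < f x
  f_smooth : ContDiffOn ℝ (⊤ : ℕ∞) f Γ
  f_perm_invariant : ∀ x ∈ Γ, ∀ σ : Equiv.Perm (Fin n), f (fun i => x (σ i)) = f x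
  f_concave : ConcaveOn ℝ Γ f
  f_deriv_pos : ∀ x ∈ Γ, ∀ i : Fin n, 0 < fderiv ℝ f x (Pi.single i 1)
  f_boundary_zero : ∀ x₀ ∈ frontier Γ, Tendsto f (nhdsWithin x₀ Γ) (nhds 0)
  f_proper : ∀ x ∈ Γ, Tendsto (fun R : ℝ => f (R • x)) atTop atTop

/-- `Γ_∞`: the set of `λ ∈ ℝⁿ` such that for every `i`, replacing the `i`-th coordinate by any
sufficiently large `R` lands in `Γ`. -/
def GammaInfty (n : ℕ) (Γ : Set (Fin n → ℝ)) : Set (Fin n → ℝ) :=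
  {x | ∀ i : Fin n, ∃ R₀ : ℝ, ∀ R ≥ R₀, Function.update x i R ∈ Γ}

/-- `f_{∞,i}(λ) = lim_{R→+∞} f(λ₁,…,λ_{i−1},R,λ_{i+1},…,λₙ)`, realized as a limsup in `EReal`
(the limit exists in `(0,+∞]` since `f` is increasing in `λᵢ`). -/
noncomputable def fInftyi (n : ℕ) (f : (Fin n → ℝ) → ℝ) (i : Fin n) (x : Fin n → ℝ) : EReal :=
  Filter.limsup (fun R : ℝ => ((f (Function.update x i R) : ℝ) : EReal)) Filter.atTop

/-- `f_∞(λ) = min_{1 ≤ i ≤ n} f_{∞,i}(λ)`, with values in `(0,+∞]`. -/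
noncomputable def fInfty (n : ℕ) (f : (Fin n → ℝ) → ℝ) (x : Fin n → ℝ) : EReal :=
  ⨅ i : Fin n, fInftyi n f i x

theorem aux_add {n : ℕ} {Γ : Set (Fin n → ℝ)} {f : (Fin n → ℝ) → ℝ}
    (hA : AssumptionA n Γ f) {a b : Fin n → ℝ} (ha : a ∈ Γ) (hb : b ∈ Γ) : a + b ∈ Γ := by
  have h := hA.convex ha hb (by norm_num : (0:ℝ) ≤ 1/2) (by norm_num : (0:ℝ) ≤ 1/2) (by norm_num)
  have h2 := hA.cone _ h 2 (by norm_num)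
  convert h2 using 1
  ext k
  simp
  ring

theorem aux_orth {n : ℕ} {Γ : Set (Fin n → ℝ)} {f : (Fin n → ℝ) → ℝ}
    (hA : AssumptionA n Γ f) {a : Fin n → ℝ} (ha : ∀ i, 0 < a i) : a ∈ GammaInfty n Γ := by
  intro i
  refine ⟨1, fun R hR => hA.orthant_subset ?_⟩
  intro k
  by_cases hk : k = i
  · subst hk
    simp only [Function.update_self]
    linarith
  · simp only [Function.update_of_ne hk]
    exact ha k

theorem aux_univ {n : ℕ} {Γ : Set (Fin n → ℝ)} {f : (Fin n → ℝ) → ℝ}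
    (hA : AssumptionA n Γ f) (i : Fin n) (R₀ ε : ℝ) (hε : 0 < ε)
    (hv : Function.update (fun _ => -ε) i R₀ ∈ Γ) : GammaInfty n Γ = Set.univ := by
  refine Set.eq_univ_of_forall fun y j => ?_
  have hw : Function.update (fun _ => -ε) j R₀ ∈ Γ := by
    convert hA.perm_invariant _ hv (Equiv.swap i j) using 1
    ext k
    by_cases hk : k = j
    · subst hk
      simp
    · have : Equiv.swap i j k ≠ i := by
        intro h
        apply hk
        have := congrArg (Equiv.swap i j) h
        simpa using this
      simp [Function.update_of_ne hk, Function.update_of_ne this]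
  have hS : 0 ≤ ∑ k, |y k| := Finset.sum_nonneg fun _ _ => abs_nonneg _
  set s : ℝ := (1 + ∑ k, |y k|) / ε with hs
  have hs0 : 0 < s := by positivity
  have hse : s * ε = 1 + ∑ k, |y k| := by
    rw [hs]
    field_simp
  refine ⟨s * R₀ + 1, fun R hR => ?_⟩
  have h1 := hA.cone _ hw s hs0
  have h2 : Function.update y j R - s • Function.update (fun _ => -ε) j R₀ ∈ Γ := by
    apply hA.orthant_subset
    intro k
    by_cases hk : k = j
    · subst hk
      simp
      linarith
    · have h3 : |y k| ≤ ∑ k, |y k| :=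
        Finset.single_le_sum (f := fun k => |y k|) (fun _ _ => abs_nonneg _) (Finset.mem_univ k)
      have := neg_abs_le (y k)
      simp [Function.update_of_ne hk]
      linarith
  have := aux_add hA h1 h2
  simpa using this

/-- Lemma 2.10 of the paper: exactly one of the following holds: (1) for every `i`, the ray
`{t·eᵢ : t ≥ 0}` is contained in the topological boundary of `Γ_∞`; (2) `Γ_∞ = ℝⁿ`. -/
theorem stmt_11 (n : ℕ) (Γ : Set (Fin n → ℝ)) (f : (Fin n → ℝ) → ℝ)
    (hA : AssumptionA n Γ f) :
    Xor'
      (∀ i : Fin n, ∀ t : ℝ, 0 ≤ t →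
        (Pi.single i t : Fin n → ℝ) ∈ frontier (GammaInfty n Γ))
      (GammaInfty n Γ = Set.univ) := by
  have hn : 0 < n := by
    rcases Nat.eq_zero_or_pos n with h | h
    · subst h
      have : (0 : Fin 0 → ℝ) ∈ Γ := hA.orthant_subset (fun i => i.elim0)
      simpa using hA.subset_halfspace this
    · exact h
  by_cases hU : GammaInfty n Γ = Set.univ
  · right
    refine ⟨hU, fun h => ?_⟩
    have := h ⟨0, hn⟩ 0 le_rfl
    rw [hU] at this
    simp at this
  · left
    refine ⟨fun i t ht => ⟨?_, fun hint => hU ?_⟩, hU⟩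
    · rw [Metric.mem_closure_iff]
      intro ε hε
      refine ⟨Pi.single i t + fun _ => ε / 2, aux_orth hA ?_, ?_⟩
      · intro k
        have : (0 : ℝ) ≤ (Pi.single i t : Fin n → ℝ) k := by
          by_cases hk : k = i
          · subst hk
            simpa using ht
          · simp [hk]
        simp only [Pi.add_apply]
        linarith
      · rw [dist_pi_lt_iff hε]
        intro k
        simp [Real.dist_eq, abs_of_pos hε]
        linarith
    · rw [mem_interior_iff_mem_nhds, Metric.mem_nhds_iff] at hint
      obtain ⟨ε, hε, hb⟩ := hint
      have hm : (Pi.single i t + fun _ => -(ε / 2) : Fin n → ℝ) ∈ GammaInfty n Γ := by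
        apply hb
        rw [Metric.mem_ball, dist_pi_lt_iff hε]
        intro k
        simp [Real.dist_eq, abs_of_pos hε]
        linarith
      obtain ⟨R₀, hR⟩ := hm i
      refine aux_univ hA i R₀ (ε / 2) (by positivity) ?_
      convert hR R₀ le_rfl using 1
      ext k
      by_cases hk : k = i
      · subst hk
        simp
      · simp [Function.update_of_ne hk, hk]
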